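/- Let P, Q be polynomials in n complex variables with Q(0) ≠ 0, and let F = P/Q. Let A be an n×n integer matrix with determinant 1 whose columns are q^{(1)},…,q^{(n)} ∈ ℤ^n, and fix 1 ≤ p ≤ n. Let ρ ∈ ℝ^n be such that Q has no zeros on the closed polydisc {z ∈ ℂ^n : |z_i| ≤ e^{ρ_i}, i = 1,…,n}. Let t = (t_1,…,t_p) ∈ ℂ^p with 0 < |t_i| < e^{⟨q^{(i)},ρ⟩} for i = 1,…,p. Assume moreover that the function G(w) := F(w^{A^{-1}}), a priori defined for w ∈ (ℂ∖{0})^n, extends to a function that is continuous and, for each fixed w' = (w_{p+1},…,w_n) on the torus {|w_j| = e^{⟨q^{(j)},ρ⟩}, j = p+1,…,n}, holomorphic in (w_1,…,w_p) on the closed polydisc {|w_i| ≤ e^{⟨q^{(i)},ρ⟩}, i = 1,…,p}. Then (1/(2πi)^n) ∫_{Γ_ρ} F(z) · [∏_{i=1}^p z^{q^{(i)}}/(z^{q^{(i)}} − t_i)] · dz_1/z_1 ∧ … ∧ dz_n/z_n = (1/(2πi)^{n−p}) ∫_{Γ_{ρ'}} F((t_1,…,t_p,w_{p+1},…,w_n)^{A^{-1}})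 · dw_{p+1}/w_{p+1} ∧ … ∧ dw_n/w_n, where ρ' = (⟨q^{(p+1)},ρ⟩,…,⟨q^{(n)},ρ⟩). -/

import Mathlib

open Complex

/-- The monomial map `w ↦ w^B` for an integer matrix `B`, with `(w^B)_j = ∏ₖ w_k ^ B k j`
(the `j`-th coordinate is the monomial with exponent vector the `j`-th column of `B`). -/
noncomputable def monoMap {n : ℕ} (B : Matrix (Fin n) (Fin n) ℤ) (w : Fin n → ℂ) : Fin n → ℂ :=
  fun j => ∏ k, w k ^ B k j

/-- The normalized torus integral `(1/(2πi)ⁿ) ∫_{Γ} g(z) dz₁ ∧ … ∧ dzₙ` over the real torus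
with center `0` and radii `R`. -/
noncomputable def normTorusIntegral {n : ℕ} (R : Fin n → ℝ) (g : (Fin n → ℂ) → ℂ) : ℂ :=
  ((2 * (Real.pi : ℂ) * I) ^ n)⁻¹ * torusIntegral g 0 R

/-!
In terms of arguments, `z ↦ z ^ A` is an endomorphism of the compact group `(ℝ/ℤ)ⁿ`. It is
surjective because `det A ≠ 0`, hence it preserves Haar measure, so it may be substituted in a mean
value over a torus. For `w = z ^ A` the kernel `z ^ q⁽ⁱ⁾ / (z ^ q⁽ⁱ⁾ - tᵢ)` becomes
`wᵢ / (wᵢ - tᵢ)`, which against `dwᵢ / (2πi wᵢ)` is the Cauchy kernel; integrating out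
`w₁, …, w_p` by Fubini and the Cauchy integral formula on the polydisc evaluates the holomorphic
extension `G` of `F ∘ (· ^ A⁻¹)` at `t`. As `tᵢ ≠ 0`, the value there is again one of `F`.
-/

open Set MeasureTheory

section IntegerMatrix

variable {ι κ μ M : Type*} [Fintype ι] [AddCommGroup M]

/-- Right multiplication `x ↦ x ᵥ* A` of row vectors with entries in an additive commutative group
by an integer matrix. On the torus `(ℝ/ℤ)ⁿ` this is the monomial map `monoMap A` in terms of
arguments. -/
def intVecMul (A : Matrix ι κ ℤ) : (ι → M) →+ (κ → M) where
  toFun x k := ∑ j, A j k • x j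
  map_zero' := by ext; simp
  map_add' x y := by ext; simp [Finset.sum_add_distrib]

theorem intVecMul_apply (A : Matrix ι κ ℤ) (x : ι → M) (k : κ) :
    intVecMul A x k = ∑ j, A j k • x j :=
  rfl

theorem intVecMul_intVecMul [Fintype κ] (A : Matrix ι κ ℤ) (B : Matrix κ μ ℤ) (x : ι → M) :
    intVecMul B (intVecMul A x) = intVecMul (A * B) x := by
  ext k
  simp only [intVecMul_apply, Matrix.mul_apply, Finset.smul_sum, Finset.sum_smul, ← mul_smul]
  rw [Finset.sum_comm]
  simp only [mul_comm]

theorem intVecMul_smul_one [DecidableEq ι] (d : ℤ) (x : ι → M) :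
    intVecMul (d • (1 : Matrix ι ι ℤ)) x = d • x := by
  ext k
  rw [intVecMul_apply, Finset.sum_eq_single k]
  · simp only [Matrix.smul_apply, Matrix.one_apply_eq, smul_eq_mul, mul_one, Pi.smul_apply]
  · intro j _ hj
    simp only [Matrix.smul_apply, Matrix.one_apply_ne hj, smul_zero, zero_smul]
  · simp

theorem intVecMul_surjective [DecidableEq ι] [DivisibleBy M ℤ] {A : Matrix ι ι ℤ}
    (hA : A.det ≠ 0) : Function.Surjective (intVecMul A : (ι → M) →+ (ι → M)) := by
  intro y
  obtain ⟨x, rfl⟩ : ∃ x, A.det • x = y := DivisibleBy.surjective_smul (ι → M) ℤ hA y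
  exact ⟨intVecMul A.adjugate x, by
    rw [intVecMul_intVecMul, Matrix.adjugate_mul, intVecMul_smul_one]⟩

theorem continuous_intVecMul [TopologicalSpace M] [IsTopologicalAddGroup M] (A : Matrix ι κ ℤ) :
    Continuous (intVecMul A : (ι → M) →+ (κ → M)) := by
  refine continuous_pi fun k => ?_
  simp only [intVecMul_apply]
  fun_prop

end IntegerMatrix

section MonomialMap

variable {n : ℕ}

theorem zpow_finsetSum₀ {ι G : Type*} [CommGroupWithZero G] {a : G} (ha : a ≠ 0) (s : Finset ι)
    (f : ι → ℤ) : a ^ ∑ i ∈ s, f i = ∏ i ∈ s, a ^ f i := by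
  classical
  induction s using Finset.induction_on with
  | empty => simp
  | insert i s hi ih => rw [Finset.sum_insert hi, Finset.prod_insert hi, zpow_add₀ ha, ih]

theorem monoMap_monoMap (A B : Matrix (Fin n) (Fin n) ℤ) {z : Fin n → ℂ} (hz : ∀ i, z i ≠ 0) :
    monoMap B (monoMap A z) = monoMap (A * B) z := by
  ext k
  simp only [monoMap, Matrix.mul_apply, ← Finset.prod_zpow, zpow_finsetSum₀ (hz _), zpow_mul]
  exact Finset.prod_comm

theorem monoMap_one (z : Fin n → ℂ) : monoMap 1 z = z := by
  ext k
  simp only [monoMap, Matrix.one_apply]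
  rw [Finset.prod_eq_single k] <;> simp +contextual

theorem monoMap_nonsing_inv_monoMap {A : Matrix (Fin n) (Fin n) ℤ} (hA : IsUnit A.det)
    {z : Fin n → ℂ} (hz : ∀ i, z i ≠ 0) : monoMap A⁻¹ (monoMap A z) = z := by
  rw [monoMap_monoMap A A⁻¹ hz, A.mul_nonsing_inv hA, monoMap_one]

theorem monoMap_ne_zero (A : Matrix (Fin n) (Fin n) ℤ) {z : Fin n → ℂ} (hz : ∀ i, z i ≠ 0)
    (k : Fin n) : monoMap A z k ≠ 0 :=
  Finset.prod_ne_zero_iff.2 fun j _ => zpow_ne_zero _ (hz j)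

end MonomialMap

section PolySphere

variable {ι : Type*}

theorem sub_ne_zero_of_mem_sphere_abs_of_mem_ball {c z t : ℂ} {r : ℝ}
    (hz : z ∈ Metric.sphere c |r|) (ht : t ∈ Metric.ball c r) : z - t ≠ 0 := by
  intro h
  rw [sub_eq_zero.1 h, mem_sphere_iff_norm] at hz
  exact ((mem_ball_iff_norm.1 ht).trans_le (le_abs_self r)).ne hz

theorem ne_zero_of_mem_pi_sphere_abs {R : ι → ℝ} (hR : ∀ i, R i ≠ 0) {z : ι → ℂ}
    (hz : z ∈ univ.pi fun i => Metric.sphere 0 |R i|) (i : ι) : z i ≠ 0 :=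
  ne_zero_of_mem_sphere (abs_ne_zero.2 (hR i)) ⟨_, hz i trivial⟩

theorem pi_sphere_abs_eq {R : ι → ℝ} (hR : ∀ i, 0 < R i) :
    (univ.pi fun i => Metric.sphere (0 : ℂ) |R i|) = {z | ∀ i, ‖z i‖ = R i} := by
  ext z
  simp [abs_of_pos (hR _)]

end PolySphere

section TorusMap

variable {ι : Type*}

/-- The parametrization of the torus with center `0` and radii `R` by `(ℝ/ℤ)^ι`, on which the group
structure and the Haar measure are available; compare `torusMap`, which is defined on `ℝ^n`. -/
noncomputable def addTorusMap (R : ι → ℝ) (x : UnitAddTorus ι) : ι → ℂ :=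
  fun i => R i * AddCircle.toCircle (x i)

@[fun_prop]
theorem continuous_addTorusMap (R : ι → ℝ) : Continuous (addTorusMap R) :=
  continuous_pi fun i => continuous_const.mul <|
    continuous_subtype_val.comp (AddCircle.continuous_toCircle.comp (continuous_apply i))

theorem addTorusMap_mem_pi_sphere (R : ι → ℝ) (x : UnitAddTorus ι) :
    addTorusMap R x ∈ univ.pi fun i => Metric.sphere (0 : ℂ) |R i| := by
  simp [addTorusMap, Circle.norm_coe]

theorem addTorusMap_coe {n : ℕ} (R θ : Fin n → ℝ) :
    addTorusMap R (fun i => (θ i : UnitAddCircle)) = torusMap 0 R ((2 * Real.pi) • θ) := by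
  ext i
  simp [addTorusMap, torusMap, AddCircle.toCircle_apply_mk, Circle.coe_exp]

theorem addTorusMap_append {p m : ℕ} (R : Fin (p + m) → ℝ) (x : UnitAddTorus (Fin p))
    (y : UnitAddTorus (Fin m)) :
    addTorusMap R (Fin.append x y) =
      Fin.append (addTorusMap (R ∘ Fin.castAdd m) x) (addTorusMap (R ∘ Fin.natAdd p) y) := by
  ext k
  refine Fin.addCases (fun i => ?_) (fun j => ?_) k <;> simp [addTorusMap]

theorem toCircle_sum {T : ℝ} (s : Finset ι) (x : ι → AddCircle T) :
    AddCircle.toCircle (∑ i ∈ s, x i) = ∏ i ∈ s, AddCircle.toCircle (x i) := by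
  classical
  induction s using Finset.induction_on with
  | empty => simp
  | insert i s hi ih => rw [Finset.sum_insert hi, Finset.prod_insert hi, AddCircle.toCircle_add, ih]

theorem monoMap_addTorusMap {n : ℕ} (A : Matrix (Fin n) (Fin n) ℤ) (R : Fin n → ℝ)
    (x : UnitAddTorus (Fin n)) :
    monoMap A (addTorusMap R x) = addTorusMap (fun k => ∏ j, R j ^ A j k) (intVecMul A x) := by
  ext k
  have coe_toCircle_sum : (AddCircle.toCircle (∑ j, A j k • x j) : ℂ) =
      ∏ j, (AddCircle.toCircle (x j) : ℂ) ^ A j k := by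
    rw [toCircle_sum]
    refine (map_prod Circle.coeHom _ _).trans (Finset.prod_congr rfl fun j _ => ?_)
    exact (congrArg _ (AddCircle.toCircle_zsmul _ _)).trans (Circle.coe_zpow _ _)
  simp [monoMap, addTorusMap, intVecMul_apply, coe_toCircle_sum, mul_zpow, Finset.prod_mul_distrib]

end TorusMap

section TorusAverage

variable {E : Type*} [NormedAddCommGroup E] [NormedSpace ℂ E]

/-- The Haar probability measure of the torus `(ℝ/ℤ)^ι`. It is not the `volume` of `UnitAddTorus ι`,
whose measure space instance is local to Mathlib's Fourier theory. -/
noncomputable abbrev addTorusHaar (ι : Type*) [Fintype ι] : Measure (UnitAddTorus ι) :=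
  Measure.pi fun _ => AddCircle.haarAddCircle

/-- The mean value of `f` over the torus with center `0` and radii `R`, the analogue of
`Real.circleAverage` in several variables: integration against `∏ i, dzᵢ / (2πi zᵢ)`. -/
noncomputable def torusAverage {ι : Type*} [Fintype ι] (R : ι → ℝ) (f : (ι → ℂ) → E) : E :=
  ∫ x, f (addTorusMap R x) ∂addTorusHaar ι

theorem torusAverage_congr {ι : Type*} [Fintype ι] {R : ι → ℝ} {f g : (ι → ℂ) → E}
    (h : EqOn f g (univ.pi fun i => Metric.sphere 0 |R i|)) :
    torusAverage R f = torusAverage R g :=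
  integral_congr_ae <| .of_forall fun x => h (addTorusMap_mem_pi_sphere R x)

open scoped Pointwise in
theorem torusAverage_eq_setIntegral {n : ℕ} (R : Fin n → ℝ) (f : (Fin n → ℂ) → E) :
    torusAverage R f =
      ((2 * Real.pi) ^ n)⁻¹ • ∫ θ in Icc (0 : Fin n → ℝ) (fun _ => 2 * Real.pi),
        f (torusMap 0 R θ) := by
  have two_pi_smul_cube : (2 * Real.pi) • univ.pi (fun _ : Fin n => Ioc (0 : ℝ) (0 + 1)) =
      univ.pi fun _ => Ioc 0 (2 * Real.pi) := by
    rw [smul_set_univ_pi]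
    simp [Pi.smul_def, LinearOrderedField.smul_Ioc Real.two_pi_pos]
  have cube_ae_eq : univ.pi (fun _ : Fin n => Ioc 0 (2 * Real.pi)) =ᵐ[volume]
      Icc (0 : Fin n → ℝ) fun _ => 2 * Real.pi :=
    Measure.univ_pi_Ioc_ae_eq_Icc
  calc torusAverage R f
    _ = ∫ θ in univ.pi fun _ => Ioc 0 (0 + 1), f (torusMap 0 R ((2 * Real.pi) • θ)) := by
      simp only [← addTorusMap_coe, pi, mem_univ, true_imp_iff]
      exact UnitAddTorus.integral_preimage (fun x => f (addTorusMap R x)) 0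
    _ = _ := by
      rw [Measure.setIntegral_comp_smul_of_pos volume (fun θ => f (torusMap 0 R θ)) _
        Real.two_pi_pos, two_pi_smul_cube, setIntegral_congr_set cube_ae_eq,
        Module.finrank_fin_fun]

theorem torusIntegral_eq_smul_torusAverage {n : ℕ} (f : (Fin n → ℂ) → E) (R : Fin n → ℝ) :
    torusIntegral f 0 R =
      (2 * Real.pi * I : ℂ) ^ n • torusAverage R fun z => (∏ i, z i) • f z := by
  have jacobian : ∀ θ : Fin n → ℝ,
      (∏ i, R i * exp (θ i * I) * I : ℂ) = I ^ n * ∏ i, torusMap 0 R θ i := fun θ => by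
    simp [torusMap, Finset.prod_mul_distrib, mul_comm]
  simp only [torusIntegral, jacobian, mul_smul]
  rw [integral_smul, torusAverage_eq_setIntegral, ← Complex.coe_smul, smul_smul]
  congr 1
  push_cast
  rw [mul_pow, mul_assoc, mul_comm (I ^ n), mul_inv_cancel_left₀]
  exact pow_ne_zero _ (by simp [Real.pi_ne_zero])

theorem normTorusIntegral_div_prod {n : ℕ} {R : Fin n → ℝ} (hR : ∀ i, R i ≠ 0)
    (f : (Fin n → ℂ) → ℂ) :
    normTorusIntegral R (fun z => f z / ∏ j, z j) = torusAverage R f := by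
  rw [normTorusIntegral, torusIntegral_eq_smul_torusAverage, smul_eq_mul,
    inv_mul_cancel_left₀ (pow_ne_zero _ two_pi_I_ne_zero)]
  exact torusAverage_congr fun z hz => mul_div_cancel₀ _ <|
    Finset.prod_ne_zero_iff.2 fun i _ => ne_zero_of_mem_pi_sphere_abs hR hz i

theorem measurePreserving_intVecMul {ι : Type*} [Fintype ι] [DecidableEq ι] {A : Matrix ι ι ℤ}
    (hA : A.det ≠ 0) :
    MeasurePreserving (intVecMul A : UnitAddTorus ι →+ UnitAddTorus ι) (addTorusHaar ι)
      (addTorusHaar ι) := by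
  apply AddMonoidHom.measurePreserving (continuous_intVecMul A) (intVecMul_surjective hA) rfl

theorem torusAverage_monoMap {n : ℕ} {A : Matrix (Fin n) (Fin n) ℤ} (hA : A.det ≠ 0)
    (R : Fin n → ℝ) {f : (Fin n → ℂ) → E}
    (hf : ContinuousOn f (univ.pi fun k => Metric.sphere 0 |∏ j, R j ^ A j k|)) :
    torusAverage R (fun z => f (monoMap A z)) = torusAverage (fun k => ∏ j, R j ^ A j k) f := by
  have hmp := measurePreserving_intVecMul hA
  have hcont : Continuous fun x => f (addTorusMap (fun k => ∏ j, R j ^ A j k) x) :=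
    hf.comp_continuous (continuous_addTorusMap _) (addTorusMap_mem_pi_sphere _)
  simp only [torusAverage, monoMap_addTorusMap]
  rw [← integral_map hmp.aemeasurable hcont.aestronglyMeasurable, hmp.map_eq]

theorem measurePreserving_finAppend {p m : ℕ} {α : Type*} [MeasurableSpace α]
    (μ : Fin (p + m) → Measure α) [∀ i, SigmaFinite (μ i)] :
    MeasurePreserving (fun x : (Fin p → α) × (Fin m → α) => Fin.append x.1 x.2)
      ((Measure.pi fun i => μ (Fin.castAdd m i)).prod (Measure.pi fun j => μ (Fin.natAdd p j)))
      (Measure.pi μ) := by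
  have hmeas : Measurable fun x : (Fin p → α) × (Fin m → α) => Fin.append x.1 x.2 := by
    refine measurable_pi_lambda _ (Fin.addCases (fun i => ?_) fun j => ?_)
    · simpa using! (measurable_pi_apply i).comp measurable_fst
    · simpa using! (measurable_pi_apply j).comp measurable_snd
  refine ⟨hmeas, (Measure.pi_eq fun s hs => ?_).symm⟩
  have preimage_box : (fun x : (Fin p → α) × (Fin m → α) => Fin.append x.1 x.2) ⁻¹' univ.pi s =
      (univ.pi fun i => s (Fin.castAdd m i)) ×ˢ univ.pi fun j => s (Fin.natAdd p j) := by
    ext x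
    simp [Fin.forall_fin_add]
  rw [Measure.map_apply hmeas (.univ_pi hs), preimage_box, Measure.prod_prod, Measure.pi_pi,
    Measure.pi_pi, Fin.prod_univ_add]

theorem torusAverage_append {p m : ℕ} {R : Fin (p + m) → ℝ} {f : (Fin (p + m) → ℂ) → E}
    (hf : ContinuousOn f (univ.pi fun k => Metric.sphere 0 |R k|)) :
    torusAverage R f =
      torusAverage (R ∘ Fin.natAdd p) fun w' =>
        torusAverage (R ∘ Fin.castAdd m) fun w => f (Fin.append w w') := by
  have hmp : MeasurePreserving
      (fun x : UnitAddTorus (Fin p) × UnitAddTorus (Fin m) => Fin.append x.1 x.2)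
      ((addTorusHaar (Fin p)).prod (addTorusHaar (Fin m))) (addTorusHaar (Fin (p + m))) :=
    measurePreserving_finAppend fun _ => AddCircle.haarAddCircle
  have hcont : Continuous fun x => f (addTorusMap R x) :=
    hf.comp_continuous (continuous_addTorusMap R) (addTorusMap_mem_pi_sphere R)
  have happend : Continuous fun x : UnitAddTorus (Fin p) × UnitAddTorus (Fin m) =>
      f (addTorusMap R (Fin.append x.1 x.2)) :=
    hcont.comp (by apply Fin.continuous_append)
  simp only [torusAverage, ← addTorusMap_append]
  rw [← hmp.map_eq, integral_map hmp.aemeasurable hcont.aestronglyMeasurable]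
  exact integral_prod_symm _ <|
    happend.integrable_of_hasCompactSupport (HasCompactSupport.of_compactSpace _)

end TorusAverage

section CauchyFormula

variable {E : Type*} [NormedAddCommGroup E] {n : ℕ}

theorem continuous_torusMap (c : Fin n → ℂ) (R : Fin n → ℝ) : Continuous (torusMap c R) := by
  unfold torusMap
  fun_prop

theorem torusMap_mem_pi_sphere (c : Fin n → ℂ) (R θ : Fin n → ℝ) :
    torusMap c R θ ∈ univ.pi fun i => Metric.sphere (c i) |R i| := by
  simp [torusMap, Complex.norm_exp_ofReal_mul_I]

theorem torusIntegrable_of_continuousOn {f : (Fin n → ℂ) → E} {c : Fin n → ℂ} {R : Fin n → ℝ}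
    (hf : ContinuousOn f (univ.pi fun i => Metric.sphere (c i) |R i|)) : TorusIntegrable f c R :=
  (hf.comp_continuous (continuous_torusMap c R) (torusMap_mem_pi_sphere c R)).integrableOn_Icc

theorem continuousOn_prod_sub_inv {c t : Fin n → ℂ} {R : Fin n → ℝ}
    (ht : t ∈ univ.pi fun i => Metric.ball (c i) (R i)) :
    ContinuousOn (fun w => ∏ i, (w i - t i)⁻¹) (univ.pi fun i => Metric.sphere (c i) |R i|) :=
  continuousOn_finsetProd _ fun i _ => ContinuousOn.inv₀ (by fun_prop) fun _ hw =>
    sub_ne_zero_of_mem_sphere_abs_of_mem_ball (hw i trivial) (ht i trivial)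

theorem continuousOn_prod_div_sub {ι κ : Type*} [Fintype ι] (e : ι → κ) {R : κ → ℝ} {t : ι → ℂ}
    (ht : t ∈ univ.pi fun i => Metric.ball 0 (R (e i))) :
    ContinuousOn (fun w : κ → ℂ => ∏ i, w (e i) / (w (e i) - t i))
      (univ.pi fun k => Metric.sphere 0 |R k|) :=
  continuousOn_finsetProd _ fun i _ => ContinuousOn.div (by fun_prop) (by fun_prop) fun _ hw =>
    sub_ne_zero_of_mem_sphere_abs_of_mem_ball (hw (e i) trivial) (ht i trivial)

variable [NormedSpace ℂ E]

theorem torusIntegrable_prod_sub_inv_smul {c t : Fin n → ℂ} {R : Fin n → ℝ}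
    (ht : t ∈ univ.pi fun i => Metric.ball (c i) (R i)) {g : (Fin n → ℂ) → E}
    (hg : ContinuousOn g (univ.pi fun i => Metric.closedBall (c i) (R i))) :
    TorusIntegrable (fun w => (∏ i, (w i - t i)⁻¹) • g w) c R := by
  refine torusIntegrable_of_continuousOn ((continuousOn_prod_sub_inv ht).smul (hg.mono ?_))
  refine pi_mono fun i _ => ?_
  rw [abs_of_pos (Metric.pos_of_mem_ball (ht i trivial))]
  exact Metric.sphere_subset_closedBall

variable [CompleteSpace E]

theorem torusIntegral_prod_sub_inv_smul {c t : Fin n → ℂ} {R : Fin n → ℝ}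
    (ht : t ∈ univ.pi fun i => Metric.ball (c i) (R i)) {g : (Fin n → ℂ) → E}
    (hg : DifferentiableOn ℂ g (univ.pi fun i => Metric.closedBall (c i) (R i))) :
    torusIntegral (fun w => (∏ i, (w i - t i)⁻¹) • g w) c R =
      (2 * Real.pi * I : ℂ) ^ n • g t := by
  induction n with
  | zero => simp [Subsingleton.elim c t]
  | succ n ih =>
    have ht0 : t 0 ∈ Metric.ball (c 0) (R 0) := ht 0 trivial
    have htail : Fin.tail t ∈ univ.pi fun i : Fin n => Metric.ball (c i.succ) (R i.succ) :=
      fun i _ => ht i.succ trivial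
    have inner_integral : ∀ z ∈ Metric.sphere (c 0) (R 0),
        torusIntegral (fun y => (∏ i, ((Fin.cons z y : Fin (n + 1) → ℂ) i - t i)⁻¹) •
          g (Fin.cons z y)) (c ∘ Fin.succ) (R ∘ Fin.succ) =
        (z - t 0)⁻¹ • (2 * Real.pi * I : ℂ) ^ n • g (Fin.cons z (Fin.tail t)) := by
      intro z hz
      simp only [Fin.prod_univ_succ, Fin.cons_zero, Fin.cons_succ, mul_smul]
      rw [torusIntegral_smul]
      congr 1
      exact ih htail <| hg.comp (by fun_prop) fun y hy =>
        mem_univ_pi.2 <| Fin.cases (Metric.sphere_subset_closedBall hz) fun i => hy i trivial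
    have hslice : DifferentiableOn ℂ
        (fun z => (2 * Real.pi * I : ℂ) ^ n • g (Fin.cons z (Fin.tail t)))
        (Metric.closedBall (c 0) (R 0)) :=
      (hg.comp (by fun_prop) fun z hz => mem_univ_pi.2 <| Fin.cases hz fun i =>
        Metric.ball_subset_closedBall (htail i trivial)).const_smul _
    rw [torusIntegral_succ (torusIntegrable_prod_sub_inv_smul ht hg.continuousOn),
      circleIntegral.integral_congr (Metric.pos_of_mem_ball ht0).le inner_integral,
      hslice.circleIntegral_sub_inv_smul ht0, Fin.cons_self_tail, smul_smul, pow_succ']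

theorem torusAverage_prod_div_sub_smul {R : Fin n → ℝ} {t : Fin n → ℂ}
    (ht : t ∈ univ.pi fun i => Metric.ball 0 (R i)) {g : (Fin n → ℂ) → E}
    (hg : DifferentiableOn ℂ g (univ.pi fun i => Metric.closedBall 0 (R i))) :
    torusAverage R (fun w => (∏ i, w i / (w i - t i)) • g w) = g t := by
  have cauchy := torusIntegral_prod_sub_inv_smul (c := 0) ht hg
  rw [torusIntegral_eq_smul_torusAverage] at cauchy
  simpa only [div_eq_mul_inv, Finset.prod_mul_distrib, mul_smul] using
    smul_right_injective E (pow_ne_zero n two_pi_I_ne_zero) cauchy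

theorem torusAverage_prod_castAdd_div_sub_smul {p m : ℕ} {R : Fin (p + m) → ℝ} {t : Fin p → ℂ}
    (ht : t ∈ univ.pi fun i => Metric.ball 0 (R (Fin.castAdd m i))) {G : (Fin (p + m) → ℂ) → E}
    (hGc : ContinuousOn G (univ.pi fun k => Metric.sphere 0 |R k|))
    (hGd : ∀ w' ∈ univ.pi fun j => Metric.sphere (0 : ℂ) |R (Fin.natAdd p j)|,
      DifferentiableOn ℂ (fun w => G (Fin.append w w'))
        (univ.pi fun i => Metric.closedBall 0 (R (Fin.castAdd m i)))) :
    torusAverage R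
        (fun w => (∏ i, w (Fin.castAdd m i) / (w (Fin.castAdd m i) - t i)) • G w) =
      torusAverage (R ∘ Fin.natAdd p) fun w' => G (Fin.append t w') := by
  rw [torusAverage_append ((continuousOn_prod_div_sub (Fin.castAdd m) ht).fun_smul hGc)]
  refine torusAverage_congr fun w' hw' => ?_
  simp only [Fin.append_left]
  exact torusAverage_prod_div_sub_smul (R := R ∘ Fin.castAdd m) ht (hGd w' hw')

end CauchyFormula

theorem finAppend_ne_zero {p m : ℕ} {x : Fin p → ℂ} {y : Fin m → ℂ} (hx : ∀ i, x i ≠ 0)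
    (hy : ∀ j, y j ≠ 0) (k : Fin (p + m)) : (Fin.append x y : Fin (p + m) → ℂ) k ≠ 0 := by
  refine Fin.addCases (fun i => ?_) (fun j => ?_) k <;> simp [hx, hy]

theorem diagonal_lower_multiplicity_general {p m : ℕ} (F : (Fin (p + m) → ℂ) → ℂ)
    {A : Matrix (Fin (p + m)) (Fin (p + m)) ℤ} (hA : IsUnit A.det)
    {r R : Fin (p + m) → ℝ} (hr : ∀ j, 0 < r j) (hR : ∀ k, R k = ∏ j, r j ^ A j k)
    {t : Fin p → ℂ} (ht0 : ∀ i, t i ≠ 0) (ht : ∀ i, ‖t i‖ < R (Fin.castAdd m i))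
    {G : (Fin (p + m) → ℂ) → ℂ} (hGF : ∀ w, (∀ k, w k ≠ 0) → G w = F (monoMap A⁻¹ w))
    (hGc : ContinuousOn G {w | ∀ k, ‖w k‖ = R k})
    (hGd : ∀ w' : Fin m → ℂ, (∀ j, ‖w' j‖ = R (Fin.natAdd p j)) →
      DifferentiableOn ℂ (fun w => G (Fin.append w w')) {w | ∀ i, ‖w i‖ ≤ R (Fin.castAdd m i)}) :
    normTorusIntegral r (fun z => F z * (∏ i : Fin p, (∏ j, z j ^ A j (Fin.castAdd m i)) /
        ((∏ j, z j ^ A j (Fin.castAdd m i)) - t i)) / ∏ j, z j) =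
      normTorusIntegral (fun j => R (Fin.natAdd p j))
        (fun w' => F (monoMap A⁻¹ (Fin.append t w')) / ∏ j, w' j) := by
  obtain rfl : R = fun k => ∏ j, r j ^ A j k := funext hR
  set R : Fin (p + m) → ℝ := fun k => ∏ j, r j ^ A j k
  have hRpos : ∀ k, 0 < R k := fun k => Finset.prod_pos fun j _ => zpow_pos (hr j) _
  have htR : t ∈ univ.pi fun i => Metric.ball 0 (R (Fin.castAdd m i)) := by simpa using ht
  rw [← pi_sphere_abs_eq hRpos] at hGc
  let K : (Fin (p + m) → ℂ) → ℂ := fun w =>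
    (∏ i, w (Fin.castAdd m i) / (w (Fin.castAdd m i) - t i)) • G w
  calc _ = torusAverage r fun z => F z * ∏ i : Fin p, (∏ j, z j ^ A j (Fin.castAdd m i)) /
        ((∏ j, z j ^ A j (Fin.castAdd m i)) - t i) :=
      normTorusIntegral_div_prod (fun j => (hr j).ne') _
    _ = torusAverage r fun z => K (monoMap A z) := torusAverage_congr fun z hz => by
      have hz0 := ne_zero_of_mem_pi_sphere_abs (fun j => (hr j).ne') hz
      have hGz : G (monoMap A z) = F z := by
        rw [hGF _ (monoMap_ne_zero A hz0), monoMap_nonsing_inv_monoMap hA hz0]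
      simp only [K, hGz, smul_eq_mul, mul_comm (F z)]
      rfl
    _ = torusAverage R K :=
      torusAverage_monoMap hA.ne_zero r ((continuousOn_prod_div_sub _ htR).smul hGc)
    _ = torusAverage (R ∘ Fin.natAdd p) fun w' => G (Fin.append t w') :=
      torusAverage_prod_castAdd_div_sub_smul htR hGc fun w' hw' => by
        rw [pi_sphere_abs_eq fun _ => hRpos _] at hw'
        simpa [pi] using hGd w' hw'
    _ = torusAverage (R ∘ Fin.natAdd p) fun w' => F (monoMap A⁻¹ (Fin.append t w')) :=
      torusAverage_congr fun w' hw' => hGF _ <| finAppend_ne_zero ht0 <|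
        ne_zero_of_mem_pi_sphere_abs (fun _ => (hRpos _).ne') hw'
    _ = _ := (normTorusIntegral_div_prod (fun _ => (hRpos _).ne') _).symm

theorem exp_sum_intCast_mul {ι : Type*} [Fintype ι] (a : ι → ℤ) (ρ : ι → ℝ) :
    Real.exp (∑ j, a j * ρ j) = ∏ j, Real.exp (ρ j) ^ a j := by
  simp only [Real.exp_sum, mul_comm, Real.exp_mul, Real.rpow_intCast]

/-- Theorem 1 of the paper: lowering the multiplicity of integration in the
integral representation of the `p`-dimensional diagonal.  Here `n = p + m`, `F = P/Q` with
`Q(0) ≠ 0`, `A` is a unimodular integer matrix with columns `q⁽¹⁾,…,q⁽ⁿ⁾`, `Q` has no zeros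
on the closed polydisc of radii `e^{ρᵢ}`, and `0 < |tᵢ| < e^{⟨q⁽ⁱ⁾,ρ⟩}` for `i ≤ p`.
Assuming `G(w) = F(w^{A⁻¹})` extends continuously, holomorphically in the first `p`
variables, to (closed polydisc)×(torus), one has
`(1/(2πi)ⁿ) ∫_{Γ_ρ} F(z) ∏ᵢ₌₁ᵖ [z^{q⁽ⁱ⁾}/(z^{q⁽ⁱ⁾}−tᵢ)] dz₁/z₁ ∧ … ∧ dzₙ/zₙ
 = (1/(2πi)^{n−p}) ∫_{Γ_{ρ'}} F((t,w')^{A⁻¹}) dw_{p+1}/w_{p+1} ∧ … ∧ dwₙ/wₙ`,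
where `ρ' = (⟨q⁽ᵖ⁺¹⁾,ρ⟩,…,⟨q⁽ⁿ⁾,ρ⟩)`. -/
theorem diagonal_lower_multiplicity (p m : ℕ) (hp : 1 ≤ p)
    (P Q : MvPolynomial (Fin (p + m)) ℂ) (hQ0 : MvPolynomial.eval (0 : Fin (p + m) → ℂ) Q ≠ 0)
    (F : (Fin (p + m) → ℂ) → ℂ)
    (hF : ∀ z, F z = MvPolynomial.eval z P / MvPolynomial.eval z Q)
    (A : Matrix (Fin (p + m)) (Fin (p + m)) ℤ) (hA : A.det = 1)
    (ρ : Fin (p + m) → ℝ)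
    (hQ : ∀ z : Fin (p + m) → ℂ, (∀ i, ‖z i‖ ≤ Real.exp (ρ i)) →
      MvPolynomial.eval z Q ≠ 0)
    (t : Fin p → ℂ)
    (ht0 : ∀ i, t i ≠ 0)
    (ht : ∀ i : Fin p, ‖t i‖ < Real.exp (∑ j, (A j (Fin.castAdd m i) : ℝ) * ρ j))
    (hG : ∃ G : (Fin (p + m) → ℂ) → ℂ,
      (∀ w : Fin (p + m) → ℂ, (∀ k, w k ≠ 0) → G w = F (monoMap A⁻¹ w)) ∧
      ContinuousOn G {w : Fin (p + m) → ℂ |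
        (∀ i : Fin p, ‖w (Fin.castAdd m i)‖
          ≤ Real.exp (∑ j, (A j (Fin.castAdd m i) : ℝ) * ρ j)) ∧
        (∀ j' : Fin m, ‖w (Fin.natAdd p j')‖
          = Real.exp (∑ j, (A j (Fin.natAdd p j') : ℝ) * ρ j))} ∧
      (∀ w' : Fin m → ℂ,
        (∀ j' : Fin m, ‖w' j'‖ = Real.exp (∑ j, (A j (Fin.natAdd p j') : ℝ) * ρ j)) →
        DifferentiableOn ℂ (fun w₁ : Fin p → ℂ => G (Fin.append w₁ w'))
          {w₁ : Fin p → ℂ | ∀ i, ‖w₁ i‖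
            ≤ Real.exp (∑ j, (A j (Fin.castAdd m i) : ℝ) * ρ j)})) :
    normTorusIntegral (fun i => Real.exp (ρ i))
      (fun z => F z *
        (∏ i : Fin p, (∏ j, z j ^ A j (Fin.castAdd m i))
          / ((∏ j, z j ^ A j (Fin.castAdd m i)) - t i)) / ∏ j, z j)
    = normTorusIntegral
        (fun j' : Fin m => Real.exp (∑ j, (A j (Fin.natAdd p j') : ℝ) * ρ j))
        (fun w' => F (monoMap A⁻¹ (Fin.append t w')) / ∏ j', w' j') := by
  obtain ⟨G, hGF, hGc, hGd⟩ := hG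
  exact diagonal_lower_multiplicity_general F (by simp [hA]) (fun _ => Real.exp_pos _)
    (fun k => exp_sum_intCast_mul (A · k) ρ) ht0 ht hGF
    (hGc.mono fun w hw => ⟨fun _ => (hw _).le, fun _ => hw _⟩) hGd
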